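/- Consider the tensorized Hermite basis (h_n) of L²(ℝ³). Let δ > 0, ℓ ≥ 4 an integer, and N ≥ 1. Then there exists a constant C_N > 0 such that whenever the indices n₁, …, n_ℓ satisfy λ_{n₁} ≥ λ_{n₂}^{1+δ} and λ_{n₂} ≥ λ_{n₃} ≥ ⋯ ≥ λ_{n_ℓ}, one has |∫_{ℝ³} ∏_{j=1}^{ℓ} h_{n_j}(x) dx| ≤ C_N λ_{n₁}^{−N}. -/

import Mathlib

open MeasureTheory Complex Filter Set
open scoped ENNReal

noncomputable section

abbrev Rd (d : ℕ) := EuclideanSpace ℝ (Fin d)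

/-- The one-dimensional Hermite function
`e_k(x) = (-1)^k (k!)^{-1/2} 2^{-k/2} π^{-1/4} e^{x²/2} (d^k/dx^k)(e^{-x²})`. -/
def hermiteFun (k : ℕ) (x : ℝ) : ℝ :=
  (-1 : ℝ) ^ k *
    ((Nat.factorial k : ℝ) ^ (-(1/2 : ℝ)) * (2 : ℝ) ^ (-(k : ℝ)/2) *
      Real.pi ^ (-(1/4 : ℝ))) *
    Real.exp (x ^ 2 / 2) * iteratedDeriv k (fun y => Real.exp (-y ^ 2)) x

/-- The tensorized Hermite function on `ℝ³`. -/
def hermite3 (n : Fin 3 → ℕ) (x : Rd 3) : ℝ :=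
  ∏ i, hermiteFun (n i) (x i)

/-- `λ_n = √(2(n₁+n₂+n₃)+3)`. -/
def lam3 (n : Fin 3 → ℕ) : ℝ :=
  Real.sqrt (2 * (∑ i, (n i : ℝ)) + 3)

/-!
The integral factorizes over the coordinates, so everything happens in one dimension. There the
annihilation and creation operators `(x ± d/dx) / √2` move the index of `e_k` down and up with
coefficients `√k` and `√(k + 1)`. Applying one of them to a single factor of a product, the sum of
the two resulting integrals is `√2 ∫ x ∏ e_{k j}` whichever factor was chosen, while integrating the
derivative of the product shows that their differences sum to zero over the factors. Together these
two facts express the creation operator on the factor of high index through ladder operators on the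
other factors, at the gain of one ratio of low to high frequency. Iterating `M` times, starting
from `|∫ ∏ e_{k j}| ≤ (2Λ) ^ ℓ` for `ℓ` factors (two of them in `L²`, the others bounded by
`e_k² ≤ 2(k + 1)`), gives `|∫ ∏ h_{n j}| λ₁ ^ M ≲ Λ ^ (dℓ + M)` on `ℝ^d` as soon as all frequencies
but `λ₁` are at most `Λ`. With `Λ = λ₁ ^ (1 / (1 + δ))` and `M` large this beats every power of
`λ₁`.
-/

section HermiteFun

open Polynomial

lemma derivative_hermite_succ (k : ℕ) :
    derivative (hermite (k + 1)) = (k + 1 : ℕ) * hermite k := by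
  induction k with
  | zero => simp [hermite_succ]
  | succ k ih =>
    have hX := hermite_succ k
    rw [hermite_succ (k + 1), derivative_sub, derivative_mul, ih,
      derivative_X, derivative_natCast_mul]
    push_cast
    linear_combination (-((k : Polynomial ℤ) + 1)) * hX

lemma iteratedDeriv_exp_neg_sq (k : ℕ) (x : ℝ) :
    iteratedDeriv k (fun y : ℝ => Real.exp (-y ^ 2)) x =
      √2 ^ k * ((-1) ^ k * aeval (√2 * x) (hermite k) *
        Real.exp (-x ^ 2)) := by
  have hsq (y : ℝ) : (√2 * y) ^ 2 / 2 = y ^ 2 := by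
    rw [mul_pow, Real.sq_sqrt zero_le_two, mul_div_cancel_left₀ _ two_ne_zero]
  have hscale := congrFun (iteratedDeriv_comp_const_mul (n := k)
    (f := fun t : ℝ => Real.exp (-(t ^ 2 / 2))) (by fun_prop) √2) x
  simpa only [hsq, iteratedDeriv_eq_iterate, deriv_gaussian_eq_hermite_mul_gaussian] using hscale

lemma hermiteFun_eq_aeval_hermite (k : ℕ) (x : ℝ) :
    hermiteFun k x = Real.pi ^ (-(1 / 4 : ℝ)) * (√(k.factorial : ℝ))⁻¹ *
      aeval (√2 * x) (hermite k) * Real.exp (-(1 / 2) * x ^ 2) := by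
  have hfact : (k.factorial : ℝ) ^ (-(1 / 2 : ℝ)) = (√(k.factorial : ℝ))⁻¹ := by
    rw [Real.rpow_neg (by positivity), Real.sqrt_eq_rpow]
  have htwo : (2 : ℝ) ^ (-(k : ℝ) / 2) * √2 ^ k = 1 := by
    rw [Real.sqrt_eq_rpow, ← Real.rpow_natCast, ← Real.rpow_mul zero_le_two,
      ← Real.rpow_add zero_lt_two]
    ring_nf
    exact Real.rpow_zero 2
  have hsign : (-1 : ℝ) ^ k * (-1) ^ k = 1 := by rw [← mul_pow]; norm_num
  have hexp : Real.exp (x ^ 2 / 2) * Real.exp (-x ^ 2) = Real.exp (-(1 / 2) * x ^ 2) := by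
    rw [← Real.exp_add]
    ring_nf
  rw [hermiteFun, iteratedDeriv_exp_neg_sq, hfact, ← hexp]
  set p : ℝ := aeval (√2 * x) (hermite k)
  calc _ = ((-1 : ℝ) ^ k * (-1) ^ k) * ((2 : ℝ) ^ (-(k : ℝ) / 2) * √2 ^ k) *
        (Real.pi ^ (-(1 / 4 : ℝ)) * (√(k.factorial : ℝ))⁻¹ * p *
          (Real.exp (x ^ 2 / 2) * Real.exp (-x ^ 2))) := by ring
    _ = _ := by rw [hsign, htwo, one_mul, one_mul]

lemma sqrt_mul_hermiteFun_pred (k : ℕ) (x : ℝ) :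
    √k * hermiteFun (k - 1) x = Real.pi ^ (-(1 / 4 : ℝ)) * (√(k.factorial : ℝ))⁻¹ *
      aeval (√2 * x) (derivative (hermite k)) *
        Real.exp (-(1 / 2) * x ^ 2) := by
  cases k with
  | zero => simp
  | succ k =>
    have hfact : √((k + 1 : ℕ) : ℝ) * (√(k.factorial : ℝ))⁻¹ =
        (√((k + 1).factorial : ℝ))⁻¹ * (k + 1 : ℕ) := by
      rw [Nat.factorial_succ, Nat.cast_mul, Real.sqrt_mul (Nat.cast_nonneg _), mul_inv,
        mul_right_comm, ← div_eq_inv_mul, Real.div_sqrt]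
    rw [Nat.add_sub_cancel, hermiteFun_eq_aeval_hermite, derivative_hermite_succ, map_mul,
      map_natCast]
    linear_combination Real.pi ^ (-(1 / 4 : ℝ)) *
      aeval (√2 * x) (hermite k) * Real.exp (-(1 / 2) * x ^ 2) * hfact

lemma sqrt_succ_mul_hermiteFun_succ (k : ℕ) (x : ℝ) :
    √(k + 1) * hermiteFun (k + 1) x = Real.pi ^ (-(1 / 4 : ℝ)) * (√(k.factorial : ℝ))⁻¹ *
      aeval (√2 * x) (hermite (k + 1)) * Real.exp (-(1 / 2) * x ^ 2) := by
  have hfact : √((k : ℝ) + 1) * (√((k + 1).factorial : ℝ))⁻¹ = (√(k.factorial : ℝ))⁻¹ := by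
    rw [Nat.factorial_succ, Nat.cast_mul, Nat.cast_succ, Real.sqrt_mul (by positivity), mul_inv,
      mul_inv_cancel_left₀ (by positivity)]
  rw [hermiteFun_eq_aeval_hermite, ← hfact]
  ring

lemma sqrt_mul_hermiteFun_pred_add_succ (k : ℕ) (x : ℝ) :
    √k * hermiteFun (k - 1) x + √(k + 1) * hermiteFun (k + 1) x = √2 * x * hermiteFun k x := by
  rw [sqrt_mul_hermiteFun_pred, sqrt_succ_mul_hermiteFun_succ, hermiteFun_eq_aeval_hermite,
    hermite_succ, map_sub, map_mul, aeval_X]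
  ring

lemma hasDerivAt_hermiteFun (k : ℕ) (x : ℝ) :
    HasDerivAt (hermiteFun k)
      ((√k * hermiteFun (k - 1) x - √(k + 1) * hermiteFun (k + 1) x) / √2) x := by
  have hpoly : HasDerivAt
      (fun y : ℝ => aeval (√2 * y) (hermite k))
      (aeval (√2 * x) (derivative (hermite k)) * √2) x := by
    simpa only [mul_one] using! ((hermite k).hasDerivAt_aeval (√2 * x)).comp x
      ((hasDerivAt_id x).const_mul √2)
  have hgauss := ((hasDerivAt_pow 2 x).const_mul (-(1 / 2 : ℝ))).exp
  have hprod := (hpoly.const_mul (Real.pi ^ (-(1 / 4 : ℝ)) * (√(k.factorial : ℝ))⁻¹)).mul hgauss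
  rw [funext (hermiteFun_eq_aeval_hermite k)]
  refine hprod.congr_deriv ?_
  rw [sqrt_mul_hermiteFun_pred, sqrt_succ_mul_hermiteFun_succ, hermite_succ, map_sub,
    map_mul, aeval_X, eq_div_iff (by positivity)]
  set p : ℝ := aeval (√2 * x) (derivative (hermite k))
  set G := Real.exp (-(1 / 2) * x ^ 2)
  linear_combination Real.pi ^ (-(1 / 4 : ℝ)) * (√(k.factorial : ℝ))⁻¹ * p * G *
    Real.mul_self_sqrt zero_le_two

end HermiteFun

lemma integrable_eval_mul_exp_neg_mul_sq (p : Polynomial ℝ) {b : ℝ} (hb : 0 < b) :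
    Integrable fun x => p.eval x * Real.exp (-b * x ^ 2) := by
  induction p using Polynomial.induction_on' with
  | add p q hp hq => simpa only [Polynomial.eval_add, add_mul] using! hp.add hq
  | monomial n c =>
    have hn : (-1 : ℝ) < n := neg_one_lt_zero.trans_le n.cast_nonneg
    simpa only [Polynomial.eval_monomial, mul_assoc, Real.rpow_natCast] using
      (integrable_rpow_mul_exp_neg_mul_sq hb hn).const_mul c

lemma norm_le_integral_norm_of_hasDerivAt {E : Type*} [NormedAddCommGroup E] [NormedSpace ℝ E]
    [CompleteSpace E] {f f' : ℝ → E} (hderiv : ∀ x, HasDerivAt f (f' x) x) (hf : Integrable f)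
    (hf' : Integrable f') (x : ℝ) : ‖f x‖ ≤ ∫ y, ‖f' y‖ := by
  have hlim := tendsto_zero_of_hasDerivAt_of_integrableOn_Iic (a := x) (fun y _ => hderiv y)
    hf'.integrableOn hf.integrableOn
  have hftc := integral_Iic_of_hasDerivAt_of_tendsto' (a := x) (fun y _ => hderiv y)
    hf'.integrableOn hlim
  calc ‖f x‖ = ‖∫ y in Iic x, f' y‖ := by rw [hftc, sub_zero]
    _ ≤ ∫ y in Iic x, ‖f' y‖ := norm_integral_le_integral_norm f'
    _ ≤ ∫ y, ‖f' y‖ :=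
        setIntegral_le_integral hf'.norm (Eventually.of_forall fun y => norm_nonneg (f' y))

section HermiteIntegral

variable {κ : Type*} [Fintype κ]

lemma exists_hermiteFun_eq_eval_mul_exp (k : ℕ) :
    ∃ p : Polynomial ℝ, ∀ x, hermiteFun k x = p.eval x * Real.exp (-(1 / 2) * x ^ 2) := by
  refine ⟨.C (Real.pi ^ (-(1 / 4 : ℝ)) * (√(k.factorial : ℝ))⁻¹) *
    ((Polynomial.hermite k).map (algebraMap ℤ ℝ)).comp (.C √2 * .X), fun x => ?_⟩
  simp only [hermiteFun_eq_aeval_hermite, Polynomial.eval_mul, Polynomial.eval_C,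
    Polynomial.eval_comp, Polynomial.eval_X, Polynomial.eval_map_algebraMap]

lemma integrable_prod_hermiteFun [Nonempty κ] (k : κ → ℕ) :
    Integrable fun x => ∏ j, hermiteFun (k j) x := by
  choose p hp using exists_hermiteFun_eq_eval_mul_exp
  have hcard : (0 : ℝ) < Fintype.card κ := Nat.cast_pos.2 Fintype.card_pos
  refine (integrable_eval_mul_exp_neg_mul_sq (∏ j, p (k j))
    (mul_pos hcard one_half_pos)).congr (Eventually.of_forall fun x => ?_)
  simp only [hp, Finset.prod_mul_distrib, Finset.prod_const, Finset.card_univ,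
    ← Real.exp_nat_mul, Polynomial.eval_prod]
  ring_nf

lemma integrable_hermiteFun_mul_hermiteFun (a b : ℕ) :
    Integrable fun x => hermiteFun a x * hermiteFun b x := by
  simpa using integrable_prod_hermiteFun ![a, b]

/-- The integral of a product of one-dimensional Hermite functions. -/
def hermiteIntegral (k : κ → ℕ) : ℝ :=
  ∫ x, ∏ j, hermiteFun (k j) x

section Ladder

variable [DecidableEq κ] (k : κ → ℕ)

/-- The integral `∫ ∏ e_{k j}` with the factor `e_{k j}` replaced by its image `√(k j) e_{k j - 1}`
under the annihilation operator `(x + d/dx) / √2`; if `k j = 0`, the truncated index is harmless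
because the coefficient vanishes. -/
def lowerIntegral (j : κ) : ℝ :=
  √(k j) * hermiteIntegral (Function.update k j (k j - 1))

/-- The integral `∫ ∏ e_{k j}` with the factor `e_{k j}` replaced by its image
`√(k j + 1) e_{k j + 1}` under the creation operator `(x - d/dx) / √2`. -/
def raiseIntegral (j : κ) : ℝ :=
  √(k j + 1) * hermiteIntegral (Function.update k j (k j + 1))

lemma prod_hermiteFun_update (j : κ) (v : ℕ) (x : ℝ) :
    ∏ i, hermiteFun (Function.update k j v i) x =
      (∏ i ∈ Finset.univ.erase j, hermiteFun (k i) x) * hermiteFun v x := by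
  rw [← Finset.prod_erase_mul _ _ (Finset.mem_univ j), Function.update_self]
  congr 1
  refine Finset.prod_congr rfl fun i hi => ?_
  rw [Function.update_of_ne (Finset.ne_of_mem_erase hi)]

lemma lowerIntegral_add_raiseIntegral (j : κ) :
    lowerIntegral k j + raiseIntegral k j = √2 * ∫ x, x * ∏ i, hermiteFun (k i) x := by
  have : Nonempty κ := ⟨j⟩
  simp only [lowerIntegral, raiseIntegral, hermiteIntegral, ← integral_const_mul]
  rw [← integral_add ((integrable_prod_hermiteFun _).const_mul _)
    ((integrable_prod_hermiteFun _).const_mul _)]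
  congr with x
  rw [prod_hermiteFun_update, prod_hermiteFun_update,
    ← Finset.prod_erase_mul _ _ (Finset.mem_univ j)]
  linear_combination (∏ i ∈ Finset.univ.erase j, hermiteFun (k i) x) *
    sqrt_mul_hermiteFun_pred_add_succ (k j) x

lemma hasDerivAt_prod_hermiteFun (x : ℝ) :
    HasDerivAt (fun x => ∏ j, hermiteFun (k j) x)
      (∑ j, (√(k j) * ∏ i, hermiteFun (Function.update k j (k j - 1) i) x -
        √(k j + 1) * ∏ i, hermiteFun (Function.update k j (k j + 1) i) x) / √2) x := by
  refine (HasDerivAt.fun_finsetProd fun j _ => hasDerivAt_hermiteFun (k j) x).congr_deriv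
    (Finset.sum_congr rfl fun j _ => ?_)
  rw [prod_hermiteFun_update, prod_hermiteFun_update, smul_eq_mul]
  ring

lemma sum_lowerIntegral_sub_raiseIntegral [Nonempty κ] :
    ∑ j, (lowerIntegral k j - raiseIntegral k j) = 0 := by
  have hint (c : ℝ) (l : κ → ℕ) : Integrable fun x => c * ∏ i, hermiteFun (l i) x :=
    (integrable_prod_hermiteFun l).const_mul c
  have hterm (j : κ) : Integrable fun x =>
      (√(k j) * ∏ i, hermiteFun (Function.update k j (k j - 1) i) x -
        √(k j + 1) * ∏ i, hermiteFun (Function.update k j (k j + 1) i) x) / √2 :=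
    ((hint _ _).sub (hint _ _)).div_const √2
  have hzero := integral_eq_zero_of_hasDerivAt_of_integrable (hasDerivAt_prod_hermiteFun k)
    (integrable_finsetSum _ fun j _ => hterm j) (integrable_prod_hermiteFun k)
  rw [integral_finsetSum _ fun j _ => hterm j] at hzero
  simp only [integral_div, integral_sub (hint _ _) (hint _ _), integral_const_mul,
    ← Finset.sum_div] at hzero
  exact (div_eq_zero_iff.1 hzero).resolve_right (by positivity)

lemma raiseIntegral_zero_eq_lowerIntegral_one (k : Fin 2 → ℕ) :
    raiseIntegral k 0 = lowerIntegral k 1 := by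
  have hsum := sum_lowerIntegral_sub_raiseIntegral k
  have h₀ := lowerIntegral_add_raiseIntegral k 0
  have h₁ := lowerIntegral_add_raiseIntegral k 1
  rw [Fin.sum_univ_two] at hsum
  linarith

variable {k} {i : κ}

lemma abs_raiseIntegral_le_card_mul [Nontrivial κ] {Y : ℝ}
    (hlower : ∀ j ≠ i, |lowerIntegral k j| ≤ Y) (hraise : ∀ j ≠ i, |raiseIntegral k j| ≤ Y) :
    |raiseIntegral k i| ≤ Fintype.card κ * Y := by
  obtain ⟨j, hj⟩ := exists_ne i
  have hsame : lowerIntegral k i + raiseIntegral k i = lowerIntegral k j + raiseIntegral k j := by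
    rw [lowerIntegral_add_raiseIntegral, lowerIntegral_add_raiseIntegral]
  have hsum : lowerIntegral k i - raiseIntegral k i +
      ∑ l ∈ Finset.univ.erase i, (lowerIntegral k l - raiseIntegral k l) = 0 := by
    rw [Finset.add_sum_erase _ (fun l => lowerIntegral k l - raiseIntegral k l)
      (Finset.mem_univ i), sum_lowerIntegral_sub_raiseIntegral]
  have hrest : |∑ l ∈ Finset.univ.erase i, (lowerIntegral k l - raiseIntegral k l)| ≤
      (Fintype.card κ - 1) * (2 * Y) := by
    calc _ ≤ ∑ l ∈ Finset.univ.erase i, |lowerIntegral k l - raiseIntegral k l| :=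
          Finset.abs_sum_le_sum_abs _ _
      _ ≤ ∑ _l ∈ Finset.univ.erase i, 2 * Y := Finset.sum_le_sum fun l hl => by
          have hli := Finset.ne_of_mem_erase hl
          linarith [abs_sub (lowerIntegral k l) (raiseIntegral k l), hlower l hli, hraise l hli]
      _ = _ := by
          rw [Finset.sum_const, nsmul_eq_mul, Finset.cast_card_erase_of_mem (Finset.mem_univ i),
            Finset.card_univ]
  have hlj := abs_le.1 (hlower j hj)
  have hrj := abs_le.1 (hraise j hj)
  have hr := abs_le.1 hrest
  rw [abs_le]
  constructor <;> linarith

lemma abs_raiseIntegral_le_of_update_le [Nontrivial κ] {A B : ℝ}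
    (hA : ∀ j ≠ i, √(k j + 1) ≤ A)
    (hB : ∀ j ≠ i, ∀ v ≤ k j + 1, |hermiteIntegral (Function.update k j v)| ≤ B) :
    |raiseIntegral k i| ≤ Fintype.card κ * (A * B) := by
  refine abs_raiseIntegral_le_card_mul (fun j hj => ?_) fun j hj => ?_ <;>
    have hA₀ : 0 ≤ A := (Real.sqrt_nonneg _).trans (hA j hj)
  · have hsqrt : √(k j) ≤ A := (Real.sqrt_le_sqrt (by linarith)).trans (hA j hj)
    rw [lowerIntegral, abs_mul, abs_of_nonneg (Real.sqrt_nonneg _)]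
    exact mul_le_mul hsqrt (hB j hj _ (by lia)) (abs_nonneg _) hA₀
  · rw [raiseIntegral, abs_mul, abs_of_nonneg (Real.sqrt_nonneg _)]
    exact mul_le_mul (hA j hj) (hB j hj _ le_rfl) (abs_nonneg _) hA₀

end Ladder

lemma integral_hermiteFun_mul_self (k : ℕ) : ∫ x, hermiteFun k x * hermiteFun k x = 1 := by
  induction k with
  | zero =>
    have hpi : Real.pi ^ (-(1 / 4 : ℝ)) * Real.pi ^ (-(1 / 4 : ℝ)) = (√Real.pi)⁻¹ := by
      rw [← Real.rpow_add Real.pi_pos, Real.sqrt_eq_rpow, ← Real.rpow_neg Real.pi_pos.le]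
      norm_num
    have hsq (x : ℝ) :
        hermiteFun 0 x * hermiteFun 0 x = (√Real.pi)⁻¹ * Real.exp (-1 * x ^ 2) := by
      rw [show -1 * x ^ 2 = -(1 / 2) * x ^ 2 + -(1 / 2) * x ^ 2 by ring, Real.exp_add, ← hpi]
      simp only [hermiteFun_eq_aeval_hermite, Nat.factorial_zero, Nat.cast_one, Real.sqrt_one,
        inv_one, Polynomial.hermite_zero, map_one]
      ring
    simp only [hsq]
    rw [integral_const_mul, integral_gaussian, div_one, inv_mul_cancel₀ (by positivity)]
  | succ k ih =>
    have hladder := raiseIntegral_zero_eq_lowerIntegral_one ![k, k + 1]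
    have hpos : √((k : ℝ) + 1) ≠ 0 := by positivity
    simpa [raiseIntegral, lowerIntegral, hermiteIntegral, Fin.prod_univ_two, ih, hpos]
      using hladder

lemma integral_abs_hermiteFun_mul_hermiteFun_le_one (a b : ℕ) :
    ∫ x, |hermiteFun a x * hermiteFun b x| ≤ 1 := by
  have hint (k : ℕ) := (integrable_hermiteFun_mul_hermiteFun k k).div_const 2
  calc _ ≤ ∫ x, (hermiteFun a x * hermiteFun a x / 2 + hermiteFun b x * hermiteFun b x / 2) := by
        refine integral_mono (integrable_hermiteFun_mul_hermiteFun a b).abs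
          ((hint a).add (hint b)) fun x => ?_
        have hamgm := two_mul_le_add_sq |hermiteFun a x| |hermiteFun b x|
        rw [sq_abs, sq_abs] at hamgm
        simp only [abs_mul]
        linarith
    _ = 1 := by
        rw [integral_add (hint a) (hint b), integral_div, integral_div,
          integral_hermiteFun_mul_self, integral_hermiteFun_mul_self, add_halves]

lemma hasDerivAt_hermiteFun_sq (k : ℕ) (x : ℝ) :
    HasDerivAt (fun x => hermiteFun k x ^ 2)
      (√2 * √k * (hermiteFun k x * hermiteFun (k - 1) x) -
        √2 * √(k + 1) * (hermiteFun k x * hermiteFun (k + 1) x)) x := by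
  refine ((hasDerivAt_hermiteFun k x).pow 2).congr_deriv ?_
  field_simp
  rw [Real.sq_sqrt zero_le_two]
  ring

lemma hermiteFun_sq_le_sqrt_add_sqrt (k : ℕ) (x : ℝ) :
    hermiteFun k x ^ 2 ≤ √2 * √k + √2 * √(k + 1) := by
  set c : ℝ := √2 * √k
  set d : ℝ := √2 * √(k + 1)
  have hint (b : ℕ) := integrable_hermiteFun_mul_hermiteFun k b
  have hsq : Integrable fun y => hermiteFun k y ^ 2 := by simpa only [sq] using hint k
  have hderiv := ((hint (k - 1)).const_mul c).sub ((hint (k + 1)).const_mul d)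
  have hlow := (hint (k - 1)).abs.const_mul c
  have hhigh := (hint (k + 1)).abs.const_mul d
  calc hermiteFun k x ^ 2 ≤ ‖hermiteFun k x ^ 2‖ := le_abs_self _
    _ ≤ ∫ y, ‖c * (hermiteFun k y * hermiteFun (k - 1) y) -
          d * (hermiteFun k y * hermiteFun (k + 1) y)‖ :=
        norm_le_integral_norm_of_hasDerivAt (hasDerivAt_hermiteFun_sq k) hsq hderiv x
    _ ≤ ∫ y, (c * |hermiteFun k y * hermiteFun (k - 1) y| +
          d * |hermiteFun k y * hermiteFun (k + 1) y|) := by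
        refine integral_mono hderiv.norm (hlow.add hhigh) fun y => (norm_sub_le _ _).trans_eq ?_
        simp only [Real.norm_eq_abs, abs_mul c, abs_mul d, abs_of_nonneg (show 0 ≤ c by positivity),
          abs_of_nonneg (show 0 ≤ d by positivity)]
    _ ≤ c * 1 + d * 1 := by
        rw [integral_add hlow hhigh, integral_const_mul, integral_const_mul]
        gcongr <;> exact integral_abs_hermiteFun_mul_hermiteFun_le_one _ _
    _ = c + d := by rw [mul_one, mul_one]

lemma hermiteFun_sq_le (k : ℕ) (x : ℝ) : hermiteFun k x ^ 2 ≤ 2 * (k + 1) := by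
  have hsqrt (t : ℝ) (ht : 0 ≤ t) : √2 * √t ≤ t + 1 / 2 := by
    have hamgm := two_mul_le_add_sq (√2 * √t) 1
    rw [mul_pow, Real.sq_sqrt zero_le_two, Real.sq_sqrt ht] at hamgm
    linarith
  linarith [hermiteFun_sq_le_sqrt_add_sqrt k x, hsqrt k k.cast_nonneg,
    hsqrt (k + 1) (by positivity)]

lemma abs_hermiteFun_le_two_mul {k : ℕ} {Λ : ℝ} (hΛ : 1 ≤ Λ) (hk : k ≤ Λ ^ 2) (x : ℝ) :
    |hermiteFun k x| ≤ 2 * Λ :=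
  abs_le_of_sq_le_sq (by nlinarith [hermiteFun_sq_le k x]) (by positivity)

lemma abs_hermiteIntegral_le_pow [Nontrivial κ] {k : κ → ℕ} {i : κ} {Λ : ℝ} (hΛ : 1 ≤ Λ)
    (hk : ∀ j ≠ i, k j ≤ Λ ^ 2) :
    |hermiteIntegral k| ≤ (2 * Λ) ^ Fintype.card κ := by
  classical
  obtain ⟨j, hj⟩ := exists_ne i
  set s : Finset κ := (Finset.univ.erase i).erase j
  have hsplit (x : ℝ) : ∏ l, hermiteFun (k l) x =
      (∏ l ∈ s, hermiteFun (k l) x) * (hermiteFun (k j) x * hermiteFun (k i) x) := by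
    rw [← mul_assoc, Finset.prod_erase_mul _ _ (Finset.mem_erase.2 ⟨hj, Finset.mem_univ j⟩),
      Finset.prod_erase_mul _ _ (Finset.mem_univ i)]
  have hrest (x : ℝ) : |∏ l ∈ s, hermiteFun (k l) x| ≤ (2 * Λ) ^ Fintype.card κ := by
    calc |∏ l ∈ s, hermiteFun (k l) x| ≤ ∏ _l ∈ s, 2 * Λ := by
          rw [Finset.abs_prod]
          refine Finset.prod_le_prod (fun _ _ => abs_nonneg _) fun l hl =>
            abs_hermiteFun_le_two_mul hΛ (hk l ?_) x
          exact Finset.ne_of_mem_erase (Finset.mem_of_mem_erase hl)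
      _ ≤ (2 * Λ) ^ Fintype.card κ := by
          rw [Finset.prod_const]
          exact pow_le_pow_right₀ (by linarith) s.card_le_univ
  have hpair := (integrable_hermiteFun_mul_hermiteFun (k j) (k i)).abs
  calc |hermiteIntegral k| ≤ ∫ x, |∏ l, hermiteFun (k l) x| := abs_integral_le_integral_abs
    _ ≤ ∫ x, (2 * Λ) ^ Fintype.card κ * |hermiteFun (k j) x * hermiteFun (k i) x| := by
        refine integral_mono (integrable_prod_hermiteFun k).abs (hpair.const_mul _) fun x => ?_
        simp only [hsplit, abs_mul (Finset.prod s _)]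
        gcongr
        exact hrest x
    _ ≤ (2 * Λ) ^ Fintype.card κ := by
        rw [integral_const_mul]
        exact mul_le_of_le_one_right (by positivity)
          (integral_abs_hermiteFun_mul_hermiteFun_le_one _ _)

lemma abs_hermiteIntegral_mul_pow_succ_le [Nontrivial κ] {M : ℕ} {C : ℝ}
    (hM : ∀ (k : κ → ℕ) (i : κ) (Λ : ℝ), 1 ≤ Λ → (∀ j ≠ i, k j ≤ Λ ^ 2) →
      |hermiteIntegral k| * √(k i + 1) ^ M ≤ C * Λ ^ (Fintype.card κ + M))
    {k : κ → ℕ} {i : κ} {b : ℕ} (hb : k i = b + 1) {Λ : ℝ} (hΛ : 1 ≤ Λ)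
    (hk : ∀ j ≠ i, k j ≤ Λ ^ 2) :
    |hermiteIntegral k| * √(b + 1) ^ (M + 1) ≤
      Fintype.card κ * C * (2 * Λ) ^ (Fintype.card κ + (M + 1)) := by
  classical
  have hraise : raiseIntegral (Function.update k i b) i = √(b + 1) * hermiteIntegral k := by
    simp [raiseIntegral, ← hb]
  have hbound := abs_raiseIntegral_le_of_update_le (k := Function.update k i b) (i := i)
    (A := 2 * Λ) (B := C * (2 * Λ) ^ (Fintype.card κ + M) / √(b + 1) ^ M) (fun j hj => ?_)
    fun j hj v hv => ?_
  · rw [hraise, abs_mul, abs_of_nonneg (Real.sqrt_nonneg _)] at hbound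
    calc |hermiteIntegral k| * √(b + 1) ^ (M + 1)
        = √(b + 1) * |hermiteIntegral k| * √(b + 1) ^ M := by ring
      _ ≤ Fintype.card κ * (2 * Λ * (C * (2 * Λ) ^ (Fintype.card κ + M) / √(b + 1) ^ M)) *
            √(b + 1) ^ M := by gcongr
      _ = Fintype.card κ * C * (2 * Λ) ^ (Fintype.card κ + (M + 1)) := by
          field_simp
          ring
  · rw [Function.update_of_ne hj]
    exact Real.sqrt_le_iff.2 ⟨by positivity, by nlinarith [hk j hj]⟩
  · rw [Function.update_of_ne hj] at hv
    have hv' : (v : ℝ) ≤ k j + 1 := by exact_mod_cast hv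
    rw [le_div_iff₀ (by positivity)]
    have hupdate := hM (Function.update (Function.update k i b) j v) i (2 * Λ) (by linarith)
      fun l hl => ?_
    · rwa [Function.update_of_ne hj.symm, Function.update_self] at hupdate
    · rcases eq_or_ne l j with rfl | hlj
      · rw [Function.update_self]
        nlinarith [hk l hl]
      · rw [Function.update_of_ne hlj, Function.update_of_ne hl]
        nlinarith [hk l hl]

theorem exists_abs_hermiteIntegral_mul_pow_le (κ : Type*) [Fintype κ] [Nontrivial κ] (M : ℕ) :
    ∃ C : ℝ, 0 < C ∧ ∀ (k : κ → ℕ) (i : κ) (Λ : ℝ), 1 ≤ Λ → (∀ j ≠ i, k j ≤ Λ ^ 2) →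
      |hermiteIntegral k| * √(k i + 1) ^ M ≤ C * Λ ^ (Fintype.card κ + M) := by
  induction M with
  | zero =>
    refine ⟨2 ^ Fintype.card κ, by positivity, fun k i Λ hΛ hk => ?_⟩
    simpa only [pow_zero, mul_one, add_zero, mul_pow] using abs_hermiteIntegral_le_pow hΛ hk
  | succ M ih =>
    obtain ⟨C, hC, hM⟩ := ih
    set q := Fintype.card κ
    refine ⟨C + 2 ^ (M + 1) * (q * C * 2 ^ (q + (M + 1))), by positivity, fun k i Λ hΛ hk => ?_⟩
    rcases Nat.eq_zero_or_eq_succ_pred (k i) with hki | hki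
    · calc |hermiteIntegral k| * √(k i + 1) ^ (M + 1) = |hermiteIntegral k| * √(k i + 1) ^ M := by
            simp [hki]
        _ ≤ C * Λ ^ (q + M) := hM k i Λ hΛ hk
        _ ≤ C * Λ ^ (q + (M + 1)) := by
            gcongr
            exact M.le_succ
        _ ≤ _ := by
            gcongr
            exact le_add_of_nonneg_right (by positivity)
    · set b := (k i).pred
      have hsqrt : √(k i + 1) ≤ 2 * √(b + 1) := by
        rw [hki, ← Real.sqrt_sq zero_le_two, ← Real.sqrt_mul (by norm_num)]
        refine Real.sqrt_le_sqrt ?_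
        push_cast
        linarith [b.cast_nonneg (α := ℝ)]
      calc |hermiteIntegral k| * √(k i + 1) ^ (M + 1)
          ≤ |hermiteIntegral k| * (2 * √(b + 1)) ^ (M + 1) := by gcongr
        _ = 2 ^ (M + 1) * (|hermiteIntegral k| * √(b + 1) ^ (M + 1)) := by ring
        _ ≤ 2 ^ (M + 1) * (q * C * (2 * Λ) ^ (q + (M + 1))) := by
            gcongr 2 ^ (M + 1) * ?_
            exact abs_hermiteIntegral_mul_pow_succ_le hM hki hΛ hk
        _ = 2 ^ (M + 1) * (q * C * 2 ^ (q + (M + 1))) * Λ ^ (q + (M + 1)) := by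
            rw [mul_pow]
            ring
        _ ≤ _ := by
            gcongr
            exact le_add_of_nonneg_left hC.le

end HermiteIntegral

section HermiteTensor

variable {ι : Type*} [Fintype ι]

/-- The tensorized Hermite function on `ℝ^ι`. -/
def hermiteTensor (n : ι → ℕ) (x : EuclideanSpace ℝ ι) : ℝ :=
  ∏ i, hermiteFun (n i) (x i)

/-- The frequency of a tensorized Hermite function on `ℝ^ι`: the square root of its eigenvalue under
the harmonic oscillator `-Δ + |x|²`. -/
def hermiteFreq (n : ι → ℕ) : ℝ :=
  √(2 * ∑ i, (n i : ℝ) + Fintype.card ι)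

lemma lam3_eq_hermiteFreq (n : Fin 3 → ℕ) : lam3 n = hermiteFreq n := by
  rw [lam3, hermiteFreq, Fintype.card_fin, Nat.cast_ofNat]

lemma natCast_le_hermiteFreq_sq (n : ι → ℕ) (i : ι) : n i ≤ hermiteFreq n ^ 2 := by
  have hle : (n i : ℝ) ≤ ∑ j, (n j : ℝ) :=
    Finset.single_le_sum (fun j _ => (n j).cast_nonneg) (Finset.mem_univ i)
  rw [hermiteFreq, Real.sq_sqrt (by positivity)]
  linarith [(n i).cast_nonneg (α := ℝ), (Fintype.card ι).cast_nonneg (α := ℝ)]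

lemma integral_prod_hermiteTensor {κ : Type*} [Fintype κ] (n : κ → ι → ℕ) :
    ∫ x, ∏ j, hermiteTensor (n j) x = ∏ i, hermiteIntegral fun j => n j i := by
  calc ∫ x : EuclideanSpace ℝ ι, ∏ j, hermiteTensor (n j) x
      = ∫ x : EuclideanSpace ℝ ι, ∏ i, ∏ j, hermiteFun (n j i) (x i) := by
        simp only [hermiteTensor, Finset.prod_comm (s := (Finset.univ : Finset κ))]
    _ = ∫ y : ι → ℝ, ∏ i, ∏ j, hermiteFun (n j i) (y i) :=
        (EuclideanSpace.volume_preserving_symm_measurableEquiv_toLp ι).integral_comp'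
          fun y : ι → ℝ => ∏ i, ∏ j, hermiteFun (n j i) (y i)
    _ = ∏ i, hermiteIntegral fun j => n j i :=
        integral_fintype_prod_volume_eq_prod fun i t => ∏ j, hermiteFun (n j i) t

variable [Nonempty ι]

lemma one_le_hermiteFreq (n : ι → ℕ) : 1 ≤ hermiteFreq n := by
  have hcard : (1 : ℝ) ≤ Fintype.card ι := Nat.one_le_cast.2 Fintype.card_pos
  have hsum : (0 : ℝ) ≤ ∑ i, (n i : ℝ) := by positivity
  exact Real.one_le_sqrt.2 (by linarith)

lemma exists_hermiteFreq_le (n : ι → ℕ) :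
    ∃ i, hermiteFreq n ≤ √(2 * Fintype.card ι) * √(n i + 1) := by
  obtain ⟨i, -, hi⟩ := Finset.exists_max_image Finset.univ n Finset.univ_nonempty
  have hsum : ∑ j, (n j : ℝ) ≤ Fintype.card ι * n i := by
    rw [← nsmul_eq_mul, ← Finset.card_univ]
    exact Finset.sum_le_card_nsmul _ _ _ fun j hj => Nat.cast_le.2 (hi j hj)
  refine ⟨i, ?_⟩
  rw [hermiteFreq, ← Real.sqrt_mul (by positivity)]
  exact Real.sqrt_le_sqrt (by linarith [(Fintype.card ι).cast_nonneg (α := ℝ)])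

theorem exists_abs_integral_prod_hermiteTensor_mul_pow_le (ι κ : Type*) [Fintype ι] [Nonempty ι]
    [Fintype κ] [Nontrivial κ] (M : ℕ) :
    ∃ C : ℝ, 0 < C ∧ ∀ (n : κ → ι → ℕ) (j₀ : κ) (Λ : ℝ), 1 ≤ Λ →
      (∀ j ≠ j₀, hermiteFreq (n j) ≤ Λ) →
      |∫ x, ∏ j, hermiteTensor (n j) x| * hermiteFreq (n j₀) ^ M ≤
        C * Λ ^ (Fintype.card ι * Fintype.card κ + M) := by
  classical
  obtain ⟨C, hC, hM⟩ := exists_abs_hermiteIntegral_mul_pow_le κ M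
  set q := Fintype.card κ
  set d := Fintype.card ι
  refine ⟨√(2 * d) ^ M * (2 ^ q) ^ (d - 1) * C, by positivity, fun n j₀ Λ hΛ hfreq => ?_⟩
  have hfreq₀ : 0 ≤ hermiteFreq (n j₀) := Real.sqrt_nonneg _
  set I : ι → ℝ := fun i => hermiteIntegral fun j => n j i
  have hindex (i : ι) (j : κ) (hj : j ≠ j₀) : n j i ≤ Λ ^ 2 :=
    (natCast_le_hermiteFreq_sq (n j) i).trans
      (pow_le_pow_left₀ (Real.sqrt_nonneg _) (hfreq j hj) 2)
  obtain ⟨i₀, hi₀⟩ := exists_hermiteFreq_le (n j₀)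
  have hmain : |I i₀| * hermiteFreq (n j₀) ^ M ≤ √(2 * d) ^ M * (C * Λ ^ (q + M)) := by
    calc |I i₀| * hermiteFreq (n j₀) ^ M ≤ |I i₀| * (√(2 * d) * √(n j₀ i₀ + 1)) ^ M := by
          gcongr
      _ = √(2 * d) ^ M * (|I i₀| * √(n j₀ i₀ + 1) ^ M) := by ring
      _ ≤ √(2 * d) ^ M * (C * Λ ^ (q + M)) := by
          gcongr √(2 * d) ^ M * ?_
          exact hM _ j₀ Λ hΛ (hindex i₀)
  have hrest : ∏ i ∈ Finset.univ.erase i₀, |I i| ≤ ((2 * Λ) ^ q) ^ (d - 1) := by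
    calc _ ≤ ∏ _i ∈ Finset.univ.erase i₀, (2 * Λ) ^ q :=
          Finset.prod_le_prod (fun _ _ => abs_nonneg _) fun i _ =>
            abs_hermiteIntegral_le_pow hΛ (hindex i)
      _ = _ := by
          rw [Finset.prod_const, Finset.card_erase_of_mem (Finset.mem_univ i₀), Finset.card_univ]
  have hd : d * q = q * (d - 1) + q := by
    rw [← Nat.mul_add_one, Nat.sub_add_cancel Fintype.card_pos, mul_comm]
  calc _ = (∏ i ∈ Finset.univ.erase i₀, |I i|) * (|I i₀| * hermiteFreq (n j₀) ^ M) := by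
        rw [integral_prod_hermiteTensor, Finset.abs_prod, ← mul_assoc,
          Finset.prod_erase_mul _ _ (Finset.mem_univ i₀)]
    _ ≤ ((2 * Λ) ^ q) ^ (d - 1) * (√(2 * d) ^ M * (C * Λ ^ (q + M))) := by gcongr
    _ = √(2 * d) ^ M * (2 ^ q) ^ (d - 1) * C * Λ ^ (d * q + M) := by
        rw [hd, mul_pow]
        ring

end HermiteTensor

theorem statement_11_general {ι κ : Type*} [Fintype ι] [Nonempty ι] [Fintype κ] [Nontrivial κ]
    {δ : ℝ} (hδ : 0 < δ) (N : ℝ) :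
    ∃ C : ℝ, 0 < C ∧ ∀ (n : κ → ι → ℕ) (j₀ : κ),
      (∀ j ≠ j₀, hermiteFreq (n j) ^ (1 + δ) ≤ hermiteFreq (n j₀)) →
      |∫ x, ∏ j, hermiteTensor (n j) x| ≤ C * hermiteFreq (n j₀) ^ (-N) := by
  set K := Fintype.card ι * Fintype.card κ
  obtain ⟨M, hM⟩ := exists_nat_ge ((K + N * (1 + δ)) / δ)
  rw [div_le_iff₀ hδ] at hM
  obtain ⟨C, hC, hbound⟩ := exists_abs_integral_prod_hermiteTensor_mul_pow_le ι κ M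
  refine ⟨C, hC, fun n j₀ hfreq => ?_⟩
  set L := hermiteFreq (n j₀)
  have hL : 1 ≤ L := one_le_hermiteFreq _
  have hδ₁ : 0 < 1 + δ := by positivity
  have hexp : (1 + δ)⁻¹ * ((K + M : ℕ) : ℝ) ≤ -N + M := by
    rw [inv_mul_le_iff₀ hδ₁]
    push_cast
    linarith
  have hΛ : ∀ j ≠ j₀, hermiteFreq (n j) ≤ L ^ (1 + δ)⁻¹ := fun j hj =>
    (Real.le_rpow_inv_iff_of_pos (Real.sqrt_nonneg _) (by positivity) hδ₁).2 (hfreq j hj)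
  refine le_of_mul_le_mul_right ?_ (show 0 < L ^ M by positivity)
  calc |∫ x, ∏ j, hermiteTensor (n j) x| * L ^ M ≤ C * (L ^ (1 + δ)⁻¹) ^ (K + M) :=
        hbound n j₀ _ (Real.one_le_rpow hL (by positivity)) hΛ
    _ = C * L ^ ((1 + δ)⁻¹ * ((K + M : ℕ) : ℝ)) := by
        rw [Real.rpow_mul (by positivity), Real.rpow_natCast]
    _ ≤ C * L ^ (-N + M) := by gcongr
    _ = C * L ^ (-N) * L ^ M := by
        rw [Real.rpow_add (by positivity), Real.rpow_natCast, mul_assoc]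

/-- Fast decay of the integral of a product of `ℓ ≥ 4` Hermite functions when
the largest frequency dominates: if `λ_{n₁} ≥ λ_{n₂}^{1+δ}` and `λ_{n₂} ≥ λ_{n₃} ≥ ⋯ ≥ λ_{n_ℓ}`,
then `|∫ ∏_j h_{n_j}| ≤ C_N λ_{n₁}^{-N}`. -/
theorem statement_11 (δ : ℝ) (hδ : 0 < δ) (ℓ : ℕ) (hℓ : 4 ≤ ℓ) (N : ℕ) (hN : 1 ≤ N) :
    ∃ C : ℝ, 0 < C ∧ ∀ n : Fin ℓ → (Fin 3 → ℕ),
      lam3 (n ⟨1, by omega⟩) ^ (1 + δ) ≤ lam3 (n ⟨0, by omega⟩) →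
      (∀ i j : Fin ℓ, 1 ≤ (i : ℕ) → i ≤ j → lam3 (n j) ≤ lam3 (n i)) →
      |∫ x : Rd 3, ∏ j, hermite3 (n j) x| ≤ C * lam3 (n ⟨0, by omega⟩) ^ (-(N : ℝ)) := by
  have : Nontrivial (Fin ℓ) := Fin.nontrivial_iff_two_le.2 (by omega)
  simp only [lam3_eq_hermiteFreq]
  obtain ⟨C, hC, h⟩ := statement_11_general (ι := Fin 3) (κ := Fin ℓ) hδ N
  refine ⟨C, hC, fun n h₁₀ hmono => h n ⟨0, by omega⟩ fun j hj => ?_⟩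
  have hj₁ : 1 ≤ (j : ℕ) := Nat.one_le_iff_ne_zero.2 fun h => hj (Fin.ext h)
  exact (Real.rpow_le_rpow (Real.sqrt_nonneg _) (hmono _ j le_rfl hj₁) (by positivity)).trans h₁₀

end
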